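/- arXiv:1103.4817 — 2 statements merged into one kernel-verified Lean document; each statement's English description precedes it below -/
import Mathlib

section
/- Let G = A ∗ B be a free product of nontrivial groups whose abelianization G/[G,G] is infinite. Then for any nontrivial commutator word w (a word with all exponent sums zero), the verbal set w[G] is not rational in G. -/
open Pointwise

/-- The verbal set `w[G]`: all values of the word `w` in `G`. -/
def verbalSet (w : FreeGroup ℕ) (G : Type*) [Group G] : Set G :=
  {g | ∃ φ : FreeGroup ℕ →* G, φ w = g}

/-- Exponent sums of a word in the generators, as a finitely supported function. -/
noncomputable def expSum (w : FreeGroup ℕ) : ℕ →₀ ℤ :=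
  Multiplicative.toAdd
    ((FreeGroup.lift fun i => Multiplicative.ofAdd (Finsupp.single i (1 : ℤ))) w)

/-- `e(w)`: the gcd of the exponent sums of the generators in `w` (0 if all are 0). -/
noncomputable def eWord (w : FreeGroup ℕ) : ℕ :=
  (expSum w).support.gcd fun i => ((expSum w) i).natAbs

/-- A word is proper if `w[G] ≠ {1}` and `w[H] ≠ H` for some groups `G`, `H`. -/
def IsProperWord (w : FreeGroup ℕ) : Prop :=
  ∃ (G : Type) (_ : Group G) (H : Type) (_ : Group H),
    verbalSet w G ≠ {1} ∧ verbalSet w H ≠ Set.univ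

/-- Rational subsets of a monoid: the smallest family containing the finite sets and
closed under union, product and submonoid generation (Kleene star). -/
inductive IsRational {M : Type*} [Monoid M] : Set M → Prop
  | finite (s : Set M) (h : s.Finite) : IsRational s
  | union {s t : Set M} : IsRational s → IsRational t → IsRational (s ∪ t)
  | mul {s t : Set M} : IsRational s → IsRational t → IsRational (s * t)
  | star {s : Set M} : IsRational s → IsRational (Submonoid.closure s : Set M)

/-!
If a rational subset `R` of a group is a union, product or star of smaller ones, the subgroup
generated by the quotients `x / y` with `x, y ∈ R` is built from finitely many pieces, so rational
sets generate finitely generated subgroups. If `w[G]` were rational, the verbal subgroup `w(G)`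
would thus be finitely generated. It is normal, and it is nontrivial because `G` contains a free
group of infinite rank.

In a free product, the set of elements whose reduced word starts in a given factor is almost
invariant, and a nontrivial normal subgroup meets both it and its complement in infinitely many
points. A finitely generated subgroup containing such a normal subgroup has every coset crossing
the boundary of this set for a finite generating set; the boundary is finite, so the index is
finite. Hence `w(G)` would have finite index, but for a commutator word it lies in `[G, G]`,
which has infinite index.
-/

section RationalSubsets

theorem IsRational.image {M N : Type*} [Monoid M] [Monoid N] (f : M →* N) {s : Set M}
    (hs : IsRational s) : IsRational (f '' s) := by
  induction hs with
  | finite s hs => exact .finite _ (hs.image f)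
  | union _ _ ihs iht => simpa only [Set.image_union] using ihs.union iht
  | mul _ _ ihs iht => simpa only [Set.image_mul] using ihs.mul iht
  | star _ ih => simpa only [← Submonoid.coe_map, MonoidHom.map_mclosure] using ih.star

variable {G : Type*} [Group G] {s t : Set G} {u v : G}

theorem closure_eq_closure_div_sup_zpowers (hu : u ∈ s) :
    Subgroup.closure s = Subgroup.closure (s / s) ⊔ Subgroup.zpowers u := by
  apply le_antisymm
  · rw [Subgroup.closure_le]
    intro x hx
    simpa using Subgroup.mul_mem_sup (Subgroup.subset_closure (Set.div_mem_div hx hu))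
      (Subgroup.mem_zpowers u)
  · refine sup_le ((Subgroup.closure_le _).2 ?_)
      (Subgroup.zpowers_le.2 (Subgroup.subset_closure hu))
    rintro _ ⟨x, hx, y, hy, rfl⟩
    exact div_mem (Subgroup.subset_closure hx) (Subgroup.subset_closure hy)

theorem closure_union_div_union (hu : u ∈ s) (hv : v ∈ t) :
    Subgroup.closure ((s ∪ t) / (s ∪ t)) =
      Subgroup.closure (s / s) ⊔ Subgroup.closure (t / t) ⊔ Subgroup.zpowers (u / v) := by
  apply le_antisymm
  · set L := Subgroup.closure (s / s) ⊔ Subgroup.closure (t / t) ⊔ Subgroup.zpowers (u / v)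
    have huv : u / v ∈ L := Subgroup.mem_sup_right (Subgroup.mem_zpowers _)
    have div_v_mem : ∀ x ∈ s ∪ t, x / v ∈ L := by
      rintro x (hx | hx)
      · rw [← div_mul_div_cancel x u v]
        exact mul_mem (Subgroup.mem_sup_left <| Subgroup.mem_sup_left <|
          Subgroup.subset_closure (Set.div_mem_div hx hu)) huv
      · exact Subgroup.mem_sup_left <| Subgroup.mem_sup_right <|
          Subgroup.subset_closure (Set.div_mem_div hx hv)
    rw [Subgroup.closure_le]
    rintro _ ⟨x, hx, y, hy, rfl⟩
    simpa using div_mem (div_v_mem x hx) (div_v_mem y hy)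
  · refine sup_le (sup_le ?_ ?_) (Subgroup.zpowers_le.2 <| Subgroup.subset_closure <|
      Set.div_mem_div (Or.inl hu) (Or.inr hv))
    · exact Subgroup.closure_mono (Set.div_subset_div Set.subset_union_left Set.subset_union_left)
    · exact Subgroup.closure_mono (Set.div_subset_div Set.subset_union_right Set.subset_union_right)

theorem closure_mul_div_mul (hu : u ∈ s) (hv : v ∈ t) :
    Subgroup.closure ((s * t) / (s * t)) =
      Subgroup.closure (s / s) ⊔ (Subgroup.closure (t / t)).map (MulAut.conj u).toMonoidHom := by
  apply le_antisymm
  · rw [Subgroup.closure_le]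
    rintro _ ⟨_, ⟨x, hx, y, hy, rfl⟩, _, ⟨x', hx', y', hy', rfl⟩, rfl⟩
    have hleft : ∀ {a b}, a ∈ s → b ∈ s → a / b ∈ Subgroup.closure (s / s) ⊔
        (Subgroup.closure (t / t)).map (MulAut.conj u).toMonoidHom := fun ha hb =>
      Subgroup.mem_sup_left (Subgroup.subset_closure (Set.div_mem_div ha hb))
    have hright : u * (y / y') * u⁻¹ ∈ Subgroup.closure (s / s) ⊔
        (Subgroup.closure (t / t)).map (MulAut.conj u).toMonoidHom :=
      Subgroup.mem_sup_right ⟨_, Subgroup.subset_closure (Set.div_mem_div hy hy'), rfl⟩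
    have hprod : x * y / (x' * y') = x / u * (u * (y / y') * u⁻¹) * (u / x') := by
      simp [div_eq_mul_inv, mul_assoc]
    change x * y / (x' * y') ∈ _
    rw [hprod]
    exact mul_mem (mul_mem (hleft hx hu) hright) (hleft hu hx')
  · rw [MonoidHom.map_closure]
    refine sup_le ((Subgroup.closure_le _).2 ?_) ((Subgroup.closure_le _).2 ?_)
    · rintro _ ⟨x, hx, y, hy, rfl⟩
      exact Subgroup.subset_closure
        ⟨x * v, Set.mul_mem_mul hx hv, y * v, Set.mul_mem_mul hy hv, by simp⟩
    · rintro _ ⟨_, ⟨x, hx, y, hy, rfl⟩, rfl⟩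
      exact Subgroup.subset_closure
        ⟨u * x, Set.mul_mem_mul hu hx, u * y, Set.mul_mem_mul hu hy, by
          simp [div_eq_mul_inv, mul_assoc]⟩

theorem closure_submonoidClosure_div (s : Set G) :
    Subgroup.closure ((Submonoid.closure s : Set G) / (Submonoid.closure s : Set G)) =
      Subgroup.closure s := by
  have hle : Submonoid.closure s ≤ (Subgroup.closure s).toSubmonoid :=
    Submonoid.closure_le.2 Subgroup.subset_closure
  apply le_antisymm
  · rw [Subgroup.closure_le]
    rintro _ ⟨x, hx, y, hy, rfl⟩
    exact div_mem (hle hx) (hle hy)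
  · refine Subgroup.closure_mono fun x hx => ?_
    exact ⟨x, Submonoid.subset_closure hx, 1, one_mem _, div_one x⟩

theorem fg_zpowers (u : G) : (Subgroup.zpowers u).FG :=
  ⟨{u}, by rw [Finset.coe_singleton, Subgroup.zpowers_eq_closure]⟩

theorem fg_map {K : Type*} [Group K] (f : G →* K) {H : Subgroup G} (hH : H.FG) : (H.map f).FG :=
  (Subgroup.fg_iff_submonoid_fg _).2 (((Subgroup.fg_iff_submonoid_fg H).1 hH).map f)

theorem IsRational.fg_closure_div (hs : IsRational s) : (Subgroup.closure (s / s)).FG := by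
  induction hs with
  | finite s hs => exact (Subgroup.fg_iff _).2 ⟨_, rfl, hs.div hs⟩
  | @union s t _ _ ihs iht =>
    rcases s.eq_empty_or_nonempty with rfl | ⟨u, hu⟩
    · rwa [Set.empty_union]
    rcases t.eq_empty_or_nonempty with rfl | ⟨v, hv⟩
    · rwa [Set.union_empty]
    rw [closure_union_div_union hu hv]
    exact (ihs.sup iht).sup (fg_zpowers _)
  | @mul s t _ _ ihs iht =>
    rcases s.eq_empty_or_nonempty with rfl | ⟨u, hu⟩
    · simpa using Subgroup.FG.bot
    rcases t.eq_empty_or_nonempty with rfl | ⟨v, hv⟩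
    · simpa using Subgroup.FG.bot
    rw [closure_mul_div_mul hu hv]
    exact ihs.sup (fg_map _ iht)
  | @star s _ ih =>
    rw [closure_submonoidClosure_div]
    rcases s.eq_empty_or_nonempty with rfl | ⟨u, hu⟩
    · simpa using Subgroup.FG.bot
    rw [closure_eq_closure_div_sup_zpowers hu]
    exact ih.sup (fg_zpowers u)

theorem IsRational.fg_closure (hs : IsRational s) : (Subgroup.closure s).FG := by
  rw [← closure_submonoidClosure_div]
  exact hs.star.fg_closure_div

end RationalSubsets

section VerbalSubgroups

variable {G H : Type*} [Group G] [Group H] {w : FreeGroup ℕ}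

theorem image_verbalSet (w : FreeGroup ℕ) (e : G ≃* H) :
    e '' verbalSet w G = verbalSet w H := by
  ext x
  constructor
  · rintro ⟨_, ⟨φ, rfl⟩, rfl⟩
    exact ⟨e.toMonoidHom.comp φ, rfl⟩
  · rintro ⟨φ, rfl⟩
    exact ⟨_, ⟨e.symm.toMonoidHom.comp φ, rfl⟩, by simp⟩

/-- The verbal subgroup `w(G)`, generated by all values of the word `w` in `G`. -/
def verbalSubgroup (w : FreeGroup ℕ) (G : Type*) [Group G] : Subgroup G :=
  Subgroup.closure (verbalSet w G)

instance verbalSubgroup_normal : (verbalSubgroup w G).Normal where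
  conj_mem x hx y := by
    have hmap : (verbalSubgroup w G).map (MulAut.conj y).toMonoidHom = verbalSubgroup w G :=
      (MonoidHom.map_closure _ _).trans
        (congrArg Subgroup.closure (image_verbalSet w (MulAut.conj y)))
    exact hmap ▸ Subgroup.mem_map_of_mem _ hx

theorem verbalSubgroup_le_commutator (hw : w ∈ commutator (FreeGroup ℕ)) :
    verbalSubgroup w G ≤ commutator G := by
  refine (Subgroup.closure_le _).2 ?_
  rintro _ ⟨φ, rfl⟩
  rw [SetLike.mem_coe, ← Abelianization.ker_of]
  exact Abelianization.commutator_subset_ker (Abelianization.of.comp φ) hw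

theorem verbalSubgroup_ne_bot_of_injective {φ : FreeGroup ℕ →* G} (hφ : Function.Injective φ)
    (hw : w ≠ 1) : verbalSubgroup w G ≠ ⊥ := by
  intro hbot
  have hφw : φ w ∈ verbalSubgroup w G := Subgroup.subset_closure ⟨φ, rfl⟩
  rw [hbot, Subgroup.mem_bot] at hφw
  exact hw ((map_eq_one_iff φ hφ).1 hφw)

end VerbalSubgroups

section AlmostInvariantSets

variable {G : Type*} [Group G] {T : Set G} {H N : Subgroup G}

/-- Almost invariant sets in the sense of the theory of ends: each right translation changes
`T` in only finitely many points. -/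
def IsAlmostInvariant (T : Set G) : Prop :=
  ∀ x, {y | ¬(y ∈ T ↔ y * x ∈ T)}.Finite

theorem mul_mem_iff_of_forall_mul_mem_iff {s : Set G} {y : G}
    (hstep : ∀ h ∈ Subgroup.closure s, ∀ z ∈ s, (y * h ∈ T ↔ y * h * z ∈ T))
    {h : G} (hh : h ∈ Subgroup.closure s) : y * h ∈ T ↔ y ∈ T := by
  induction hh using Subgroup.closure_induction_right with
  | one => rw [mul_one]
  | mul_right h hh z hz ih => rw [← mul_assoc, ← hstep h hh z hz, ih]
  | mul_inv_cancel h hh z hz ih =>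
    rw [hstep _ (mul_mem hh (inv_mem (Subgroup.subset_closure hz))) z hz, ← mul_assoc,
      inv_mul_cancel_right, ih]

theorem IsAlmostInvariant.finiteIndex_of_forall_split (hT : IsAlmostInvariant T) (hH : H.FG)
    (hin : ∀ y, ∃ h ∈ H, y * h ∈ T) (hout : ∀ y, ∃ h ∈ H, y * h ∉ T) : H.FiniteIndex := by
  obtain ⟨s, rfl⟩ := hH
  let boundary : Set G := ⋃ z ∈ s, {y | ¬(y ∈ T ↔ y * z ∈ T)}
  have hboundary : boundary.Finite := s.finite_toSet.biUnion fun z _ => hT z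
  have hmeets : ∀ y, ∃ h ∈ Subgroup.closure (s : Set G), y * h ∈ boundary := by
    intro y
    by_contra! hmiss
    have hstep : ∀ h ∈ Subgroup.closure (s : Set G), ∀ z ∈ s, (y * h ∈ T ↔ y * h * z ∈ T) :=
      fun h hh z hz => by_contra fun hcross => hmiss h hh (Set.mem_biUnion hz hcross)
    obtain ⟨h, hh, hyh⟩ := hin y
    obtain ⟨k, hk, hyk⟩ := hout y
    exact hyk ((mul_mem_iff_of_forall_mul_mem_iff hstep hk).2
      ((mul_mem_iff_of_forall_mul_mem_iff hstep hh).1 hyh))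
  have hfinite : Finite (G ⧸ Subgroup.closure (s : Set G)) := by
    refine Set.finite_univ_iff.1 ((hboundary.image QuotientGroup.mk).subset fun q _ => ?_)
    obtain ⟨y, rfl⟩ := QuotientGroup.mk_surjective q
    obtain ⟨h, hh, hyh⟩ := hmeets y
    exact ⟨y * h, hyh, QuotientGroup.mk_mul_of_mem y hh⟩
  exact Subgroup.finiteIndex_of_finite_quotient

/- Since `N` is normal, the coset `y * H` contains `N * y`, and right translation by `y` moves
only finitely many points of `N` across the boundary of `T`. -/
theorem IsAlmostInvariant.finiteIndex_of_normal_le (hT : IsAlmostInvariant T) [N.Normal]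
    (hin : ((N : Set G) ∩ T).Infinite) (hout : ((N : Set G) \ T).Infinite) (hNH : N ≤ H)
    (hH : H.FG) : H.FiniteIndex := by
  have hconj : ∀ n ∈ N, ∀ y, y⁻¹ * n * y ∈ H := fun n hn y => hNH <| by
    simpa using ‹N.Normal›.conj_mem n hn y⁻¹
  refine hT.finiteIndex_of_forall_split hH (fun y => ?_) fun y => ?_
  · obtain ⟨n, ⟨hnN, hnT⟩, hny⟩ := (hin.sdiff (hT y)).nonempty
    have hnyT : n * y ∈ T := (not_not.1 hny).1 hnT
    exact ⟨_, hconj n hnN y, by simpa [mul_assoc] using hnyT⟩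
  · obtain ⟨n, ⟨hnN, hnT⟩, hny⟩ := (hout.sdiff (hT y)).nonempty
    have hnyT : n * y ∉ T := mt (not_not.1 hny).2 hnT
    exact ⟨_, hconj n hnN y, by simpa [mul_assoc] using hnyT⟩

end AlmostInvariantSets

section FreeProducts

open Monoid CoprodI

variable {ι : Type*} {M : ι → Type*} [∀ i, Group (M i)] {i j : ι}

open Classical in
/-- The first letter of the reduced word representing an element of a free product, together with
the index of the factor containing it; it is `none` for the identity. -/
noncomputable def firstLetter (x : CoprodI M) : Option (Σ i, M i) :=
  (Word.equiv x).toList.head?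

/-- The index of the factor containing the first letter of the reduced word representing an
element of a free product. -/
noncomputable def firstIdx (x : CoprodI M) : Option ι :=
  (firstLetter x).map Sigma.fst

theorem firstIdx_prod (w : Word M) : firstIdx w.prod = w.fstIdx := by
  classical
  exact congrArg Word.fstIdx (Word.equiv.apply_symm_apply w)

theorem firstIdx_one : firstIdx (1 : CoprodI M) = none :=
  firstIdx_prod Word.empty

theorem firstIdx_neWord_prod (w : NeWord M i j) : firstIdx w.prod = some i :=
  (firstIdx_prod w.toWord).trans (congrArg (Option.map Sigma.fst) w.toList_head?)

theorem firstLetter_of_mul {m : M i} (hm : m ≠ 1) {x : CoprodI M} (hx : firstIdx x ≠ some i) :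
    firstLetter (of m * x) = some ⟨i, m⟩ := by
  classical
  have hx : (Word.equiv x).fstIdx ≠ some i := hx
  have hword : Word.equiv (of m * x) = Word.cons m (Word.equiv x) hx hm := by
    rw [Word.cons_eq_smul]
    exact mul_smul (of m) x (Word.empty : Word M)
  rw [firstLetter, hword]
  rfl

theorem firstIdx_of_mul {m : M i} (hm : m ≠ 1) {x : CoprodI M} (hx : firstIdx x ≠ some i) :
    firstIdx (of m * x) = some i := by
  rw [firstIdx, firstLetter_of_mul hm hx, Option.map_some]

theorem coprodI_reduced_induction {motive : CoprodI M → Prop} (one : motive 1)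
    (of_mul : ∀ i (m : M i) x, m ≠ 1 → firstIdx x ≠ some i → motive x → motive (of m * x))
    (x : CoprodI M) : motive x := by
  classical
  obtain ⟨w, rfl⟩ := Word.equiv.symm.surjective x
  induction w using Word.consRecOn with
  | empty => exact one
  | cons i m w hw hm ih =>
    change motive (Word.prod _)
    rw [Word.prod_cons]
    exact of_mul i m _ hm (firstIdx_prod w ▸ hw) ih

theorem firstIdx_of {m : M i} (hm : m ≠ 1) : firstIdx (of m) = some i := by
  simpa using firstIdx_of_mul hm (x := 1) (by simp [firstIdx_one])

theorem firstIdx_mul_of (x : CoprodI M) (m : M i) :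
    x = 1 ∨ x * of m = 1 ∨ firstIdx (x * of m) = firstIdx x := by
  induction x using coprodI_reduced_induction with
  | one => exact Or.inl rfl
  | of_mul j n x hn hx ih =>
    refine Or.inr ?_
    rw [mul_assoc, firstIdx_of_mul hn hx]
    by_cases hxm : firstIdx (x * of m) = some j
    · rcases ih with rfl | hxm1 | heq
      · have hm : m ≠ 1 := by
          rintro rfl
          simp [firstIdx_one] at hxm
        obtain rfl : i = j := by simpa [firstIdx_of hm] using hxm
        rw [one_mul, ← map_mul]
        exact (eq_or_ne (n * m) 1).imp (fun h => by rw [h, map_one]) firstIdx_of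
      · simp [hxm1, firstIdx_one] at hxm
      · exact absurd (heq ▸ hxm) hx
    · exact Or.inr (firstIdx_of_mul hn hxm)

theorem isAlmostInvariant_firstIdx (i : ι) :
    IsAlmostInvariant {x : CoprodI M | firstIdx x = some i} := by
  intro x
  induction x using CoprodI.induction_on with
  | one => simp
  | of j m =>
    refine (Set.toFinite {1, (of m)⁻¹}).subset fun y hy => ?_
    rcases firstIdx_mul_of y m with h | h | h
    · exact Or.inl h
    · exact Or.inr (eq_inv_of_mul_eq_one_left h)
    · simp [h] at hy
  | mul x z hx hz =>
    refine (hx.union (hz.preimage (mul_left_injective x).injOn)).subset fun y hy => ?_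
    simp only [Set.mem_ofPred_eq, Set.mem_union, Set.mem_preimage, ← mul_assoc] at hy ⊢
    tauto

theorem exists_neWord_prod_eq {x : CoprodI M} (hx : x ≠ 1) :
    ∃ (i j : ι) (w : NeWord M i j), w.prod = x := by
  classical
  obtain ⟨v, rfl⟩ := Word.equiv.symm.surjective x
  obtain ⟨i, j, w, rfl⟩ := NeWord.of_word v (by rintro rfl; exact hx Word.prod_empty)
  exact ⟨i, j, w, rfl⟩

theorem exists_neWord_ne_prod_mem [Nontrivial ι] [∀ i, Nontrivial (M i)]
    {N : Subgroup (CoprodI M)} [N.Normal] (hN : N ≠ ⊥) :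
    ∃ i j : ι, i ≠ j ∧ ∃ w : NeWord M i j, w.prod ∈ N := by
  obtain ⟨x, hxN, hx⟩ := N.bot_or_exists_ne_one.resolve_left hN
  obtain ⟨i, j, w, rfl⟩ := exists_neWord_prod_eq hx
  by_cases hij : i = j
  · subst hij
    obtain ⟨k, hk⟩ := exists_ne i
    obtain ⟨m, hm⟩ := exists_ne (1 : M k)
    let conjugate := ((NeWord.singleton m hm).append hk w).append hk.symm
      (NeWord.singleton m⁻¹ (inv_ne_one.2 hm))
    refine ⟨i, k, hk.symm, w.append hk.symm conjugate, ?_⟩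
    simpa [conjugate] using mul_mem hxN (‹N.Normal›.conj_mem _ hxN (of m))
  · exact ⟨i, j, hij, w, hxN⟩

theorem exists_neWord_prod_eq_pow (hij : i ≠ j) (w : NeWord M i j) (n : ℕ) :
    ∃ v : NeWord M i j, v.prod = w.prod ^ (n + 1) := by
  induction n with
  | zero => exact ⟨w, (pow_one _).symm⟩
  | succ n ih =>
    obtain ⟨v, hv⟩ := ih
    exact ⟨v.append hij.symm w, by rw [NeWord.append_prod, hv, pow_succ _ (n + 1)]⟩

theorem firstIdx_neWord_prod_pow (hij : i ≠ j) (w : NeWord M i j) (n : ℕ) :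
    firstIdx (w.prod ^ (n + 1)) = some i := by
  obtain ⟨v, hv⟩ := exists_neWord_prod_eq_pow hij w n
  rw [← hv, firstIdx_neWord_prod]

theorem infinite_inter_firstIdx {N : Subgroup (CoprodI M)} (hij : i ≠ j) {w : NeWord M i j}
    (hw : w.prod ∈ N) : ((N : Set (CoprodI M)) ∩ {x | firstIdx x = some i}).Infinite := by
  have hinj : Function.Injective fun n : ℕ => w.prod ^ n := by
    refine injective_pow_iff_not_isOfFinOrder.2 fun hfin => ?_
    obtain ⟨n, hn, hpow⟩ := isOfFinOrder_iff_pow_eq_one.1 hfin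
    obtain ⟨n, rfl⟩ := Nat.exists_eq_succ_of_ne_zero hn.ne'
    simpa [hpow, firstIdx_one] using firstIdx_neWord_prod_pow hij w n
  exact Set.infinite_of_injective_forall_mem (hinj.comp Nat.succ_injective)
    fun n => ⟨pow_mem hw _, firstIdx_neWord_prod_pow hij w n⟩

theorem finiteIndex_of_fg_of_normal_le [Nontrivial ι] [∀ i, Nontrivial (M i)]
    {H N : Subgroup (CoprodI M)} [N.Normal] (hN : N ≠ ⊥) (hNH : N ≤ H) (hH : H.FG) :
    H.FiniteIndex := by
  obtain ⟨i, j, hij, w, hw⟩ := exists_neWord_ne_prod_mem hN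
  refine (isAlmostInvariant_firstIdx i).finiteIndex_of_normal_le
    (infinite_inter_firstIdx hij hw) ?_ hNH hH
  have hinv : w.inv.prod ∈ N := by simpa using hw
  refine (infinite_inter_firstIdx hij.symm hinv).mono ?_
  rintro x ⟨hxN, hxj⟩
  exact ⟨hxN, fun hxi => hij (Option.some_injective _ (hxi.symm.trans hxj))⟩

end FreeProducts

section FreeSubgroups

open Monoid CoprodI
open scoped commutatorElement

universe u v

variable {ι : Type u} {M : ι → Type v} [∀ i, Group (M i)]

theorem injective_lift_commutator {κ : Type max u v} [Nontrivial κ] {a : κ → Σ i, M i} {i : ι}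
    {b : M i} (ha : Function.Injective a) (hai : ∀ k, (a k).1 ≠ i) (ha1 : ∀ k, (a k).2 ≠ 1)
    (hb : b ≠ 1) : Function.Injective (FreeGroup.lift fun k => ⁅of (a k).2, of b⁆) := by
  let x : κ → CoprodI M := fun k => of (a k).2
  let y : CoprodI M := of b
  -- Reduced words in `X k` start with `aₖ b`, those in `Y k` with `b aₖ`.
  let X : κ → Set (CoprodI M) := fun k => {v | firstIdx (y⁻¹ * ((x k)⁻¹ * v)) ≠ some i}
  let Y : κ → Set (CoprodI M) := fun k => {v | firstIdx ((x k)⁻¹ * (y⁻¹ * v)) ≠ some (a k).1}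
  have hxX : ∀ k, ∀ v ∈ X k, firstIdx ((x k)⁻¹ * v) = some i := fun k v hv => by
    simpa [y] using firstIdx_of_mul hb hv
  have hX : ∀ k, ∀ v ∈ X k, firstLetter v = some (a k) := fun k v hv => by
    have hk : firstIdx ((x k)⁻¹ * v) ≠ some (a k).1 := by simpa [hxX k v hv] using (hai k).symm
    simpa [x] using firstLetter_of_mul (ha1 k) hk
  have hyY : ∀ k, ∀ v ∈ Y k, firstLetter (y⁻¹ * v) = some (a k) := fun k v hv => by
    simpa [x] using firstLetter_of_mul (ha1 k) hv
  have hY : ∀ k, ∀ v ∈ Y k, firstIdx v = some i := fun k v hv => by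
    have hk : firstIdx (y⁻¹ * v) ≠ some i := by simpa [firstIdx, hyY k v hv] using hai k
    simpa [y] using firstIdx_of_mul hb hk
  apply FreeGroup.injective_lift_of_ping_pong _ X Y
  · exact fun k => ⟨x k * y, by simp [X, firstIdx_one]⟩
  · refine fun k l hkl => Set.disjoint_left.2 fun v hk hl => hkl (ha ?_)
    exact Option.some_injective _ ((hX k v hk).symm.trans (hX l v hl))
  · refine fun k l hkl => Set.disjoint_left.2 fun v hk hl => hkl (ha ?_)
    exact Option.some_injective _ ((hyY k v hk).symm.trans (hyY l v hl))
  · refine fun k l => Set.disjoint_left.2 fun v hk hl => hai k ?_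
    simpa [firstIdx, hX k v hk] using hY l v hl
  · rintro k _ ⟨v, hv, rfl⟩
    have hv : firstIdx ((x k)⁻¹ * (y⁻¹ * v)) = some (a k).1 := by simpa [Y] using hv
    simpa [X, x, y, commutatorElement_def, mul_assoc, hv] using hai k
  · rintro k _ ⟨v, hv, rfl⟩
    have hv : firstIdx (y⁻¹ * ((x k)⁻¹ * v)) = some i := by simpa [X] using hv
    simpa [Y, x, y, commutatorElement_def, mul_assoc, hv] using (hai k).symm

theorem infinite_setOf_snd_ne_one [∀ i, Nontrivial (M i)] [Infinite (Σ i, M i)] :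
    {l : Σ i, M i | l.2 ≠ 1}.Infinite := by
  intro hfin
  have hfst : Sigma.fst '' {l : Σ i, M i | l.2 ≠ 1} = Set.univ := by
    refine Set.eq_univ_of_forall fun i => ?_
    obtain ⟨m, hm⟩ := exists_ne (1 : M i)
    exact ⟨⟨i, m⟩, hm, rfl⟩
  have : Finite ι := Set.finite_univ_iff.1 (hfst ▸ hfin.image _)
  refine Set.infinite_univ ((hfin.union (Set.finite_range fun i => (⟨i, 1⟩ : Σ i, M i))).subset ?_)
  rintro ⟨i, m⟩ -
  exact (ne_or_eq m 1).imp id (by rintro rfl; exact ⟨i, rfl⟩)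

theorem exists_infinite_setOf_fst_ne_and_snd_ne_one [Nontrivial ι] [∀ i, Nontrivial (M i)]
    [Infinite (Σ i, M i)] : ∃ i, {l : Σ i, M i | l.1 ≠ i ∧ l.2 ≠ 1}.Infinite := by
  obtain ⟨i, j, hij⟩ := exists_pair_ne ι
  by_contra! hfin
  refine infinite_setOf_snd_ne_one (M := M) (((hfin i).union (hfin j)).subset fun l hl => ?_)
  rcases eq_or_ne l.1 i with hi | hi
  · exact Or.inr ⟨hi ▸ hij, hl⟩
  · exact Or.inl ⟨hi, hl⟩

theorem exists_injective_freeGroup_nat_hom [Nontrivial ι] [∀ i, Nontrivial (M i)]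
    [Infinite (Σ i, M i)] : ∃ φ : FreeGroup ℕ →* CoprodI M, Function.Injective φ := by
  obtain ⟨i, hi⟩ := exists_infinite_setOf_fst_ne_and_snd_ne_one (M := M)
  obtain ⟨b, hb⟩ := exists_ne (1 : M i)
  have := hi.to_subtype
  let e := Infinite.natEmbedding {l : Σ i, M i | l.1 ≠ i ∧ l.2 ≠ 1}
  let a : ULift.{max u v} ℕ → Σ i, M i := fun k => e k.down
  have ha : Function.Injective a :=
    Subtype.val_injective.comp (e.injective.comp ULift.down_injective)
  refine ⟨(FreeGroup.lift fun k => ⁅of (a k).2, of b⁆).comp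
    (FreeGroup.freeGroupCongr Equiv.ulift.symm).toMonoidHom, ?_⟩
  exact (injective_lift_commutator ha (fun k => (e k.down).2.1) (fun k => (e k.down).2.2) hb).comp
    (MulEquiv.injective _)

theorem finite_abelianization_coprodI [Finite ι] [∀ i, Finite (M i)] :
    Finite (Abelianization (CoprodI M)) := by
  cases nonempty_fintype ι
  let f : ∀ i, M i →* Abelianization (CoprodI M) := fun i => Abelianization.of.comp of
  have hcomm : Pairwise fun i j => ∀ x y, Commute (f i x) (f j y) :=
    fun _ _ _ _ _ => Commute.all _ _
  have htop : (MonoidHom.noncommPiCoprod f hcomm).range = ⊤ := by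
    rw [MonoidHom.noncommPiCoprod_range, ← CoprodI.range_eq_iSup, CoprodI.lift_comp_of',
      MonoidHom.range_eq_top]
    exact QuotientGroup.mk_surjective
  exact Finite.of_surjective _ (MonoidHom.range_eq_top.1 htop)

theorem infinite_sigma_of_infinite_abelianization [Infinite (Abelianization (CoprodI M))] :
    Infinite (Σ i, M i) := by
  by_contra! hfin
  have : Finite ι := Finite.of_surjective (Sigma.fst (β := M)) fun i => ⟨⟨i, 1⟩, rfl⟩
  have : ∀ i, Finite (M i) := fun i => Finite.of_injective (Sigma.mk i) sigma_mk_injective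
  exact not_finite_iff_infinite.2 ‹_› finite_abelianization_coprodI

end FreeSubgroups

section RationalVerbalSets

open Monoid

variable {ι : Type*} {M : ι → Type*} [∀ i, Group (M i)] [Nontrivial ι] [∀ i, Nontrivial (M i)]
  {w : FreeGroup ℕ}

theorem finiteIndex_verbalSubgroup_of_isRational [Infinite (Σ i, M i)] (hw : w ≠ 1)
    (hrat : IsRational (verbalSet w (CoprodI M))) :
    (verbalSubgroup w (CoprodI M)).FiniteIndex := by
  obtain ⟨φ, hφ⟩ := exists_injective_freeGroup_nat_hom (M := M)
  exact finiteIndex_of_fg_of_normal_le (verbalSubgroup_ne_bot_of_injective hφ hw) le_rfl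
    hrat.fg_closure

theorem stmt_12_general [Infinite (Abelianization (CoprodI M))] (hw1 : w ≠ 1)
    (hw2 : w ∈ commutator (FreeGroup ℕ)) : ¬IsRational (verbalSet w (CoprodI M)) := by
  intro hrat
  have := infinite_sigma_of_infinite_abelianization (M := M)
  have := finiteIndex_verbalSubgroup_of_isRational hw1 hrat
  have : (commutator (CoprodI M)).FiniteIndex :=
    Subgroup.finiteIndex_of_le (verbalSubgroup_le_commutator hw2)
  have : Finite (Abelianization (CoprodI M)) := Subgroup.finite_quotient_of_finiteIndex
  exact not_finite (Abelianization (CoprodI M))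

end RationalVerbalSets

section BinaryFreeProducts

open Monoid

universe u v

/-- The family `true ↦ A`, `false ↦ B`, lifted to a common universe so that `A ∗ B` becomes
the free product of a family. -/
def BoolFamily (A : Type u) (B : Type v) : Bool → Type (max u v)
  | true => ULift.{v} A
  | false => ULift.{u} B

variable (A : Type u) (B : Type v)

instance BoolFamily.group [Group A] [Group B] : ∀ i, Group (BoolFamily A B i)
  | true => inferInstanceAs (Group (ULift A))
  | false => inferInstanceAs (Group (ULift B))

instance BoolFamily.nontrivial [Nontrivial A] [Nontrivial B] : ∀ i, Nontrivial (BoolFamily A B i)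
  | true => inferInstanceAs (Nontrivial (ULift A))
  | false => inferInstanceAs (Nontrivial (ULift B))

/-- The binary free product as the free product of a family indexed by `Bool`. -/
def coprodEquivCoprodI [Group A] [Group B] : Coprod A B ≃* CoprodI (BoolFamily A B) :=
  MonoidHom.toMulEquiv
    (Coprod.lift
      ((CoprodI.of (M := BoolFamily A B) (i := true)).comp
        (MulEquiv.ulift (α := A)).symm.toMonoidHom)
      ((CoprodI.of (M := BoolFamily A B) (i := false)).comp
        (MulEquiv.ulift (α := B)).symm.toMonoidHom))
    (CoprodI.lift fun
      | true => Coprod.inl.comp (MulEquiv.ulift (α := A)).toMonoidHom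
      | false => Coprod.inr.comp (MulEquiv.ulift (α := B)).toMonoidHom)
    (by
      ext x
      · simp only [MonoidHom.comp_apply, Coprod.lift_apply_inl]
        exact CoprodI.lift_of _ _
      · simp only [MonoidHom.comp_apply, Coprod.lift_apply_inr]
        exact CoprodI.lift_of _ _)
    (by
      ext i x
      simp only [MonoidHom.comp_apply, CoprodI.lift_of]
      cases i
      · exact Coprod.lift_apply_inr (M := A) (N := B) _ _ _
      · exact Coprod.lift_apply_inl (M := A) (N := B) _ _ _)

end BinaryFreeProducts

/-- If `G = A ∗ B` is a free product of nontrivial groups with infinite abelianization,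
then for any nontrivial commutator word `w` the set `w[G]` is not rational in `G`. -/
theorem stmt_12 {A B : Type*} [Group A] [Group B] [Nontrivial A] [Nontrivial B]
    (hab : Infinite (Abelianization (Monoid.Coprod A B)))
    (w : FreeGroup ℕ) (hw1 : w ≠ 1) (hw2 : w ∈ commutator (FreeGroup ℕ)) :
    ¬ IsRational (verbalSet w (Monoid.Coprod A B)) := by
  intro hrat
  let e := coprodEquivCoprodI A B
  have : Infinite (Abelianization (Monoid.CoprodI (BoolFamily A B))) :=
    e.abelianizationCongr.toEquiv.infinite_iff.1 hab
  exact stmt_12_general hw1 hw2 (image_verbalSet w e ▸ hrat.image e.toMonoidHom)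
end

section
/- Let F be a free non-abelian group. For any nontrivial commutator word w (i.e., 1 ≠ w ∈ [F(X),F(X)]), the verbal set w[F] is not a rational subset of F. -/
open Pointwise

/-!
A rational subset of a group generates a finitely generated subgroup. We show that the verbal
subgroup of a nontrivial commutator word `w` in a nonabelian free group is not finitely generated.

Finite generation passes to quotients, so it suffices to look at the verbal subgroup in a
two-generated group, and we take the semidirect product `FreeGroup ℤ ⋊ ℤ` in which `ℤ` translates
the free generators. Since `w` dies in abelian groups, the verbal subgroup lies in the kernel
`FreeGroup ℤ` of the projection to `ℤ`. If it were finitely generated, only finitely many free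
generators would occur in it, but substituting other generators into `w` gives a nontrivial value.
-/

section FiniteGeneration

variable {G H : Type*} [Group G] [Group H]

theorem subgroup_fg_map {K : Subgroup G} (hK : K.FG) (f : G →* H) : (K.map f).FG :=
  (Subgroup.fg_iff_submonoid_fg _).2 (((Subgroup.fg_iff_submonoid_fg _).1 hK).map f)

theorem subgroup_fg_of_map_injective {K : Subgroup G} {f : G →* H} (hf : Function.Injective f)
    (hK : (K.map f).FG) : K.FG :=
  (Subgroup.fg_iff_submonoid_fg _).2
    (((Subgroup.fg_iff_submonoid_fg _).1 hK).map_injective f hf)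

end FiniteGeneration

section RationalSubsets

variable {G : Type*} [Group G]

theorem closure_smul_mul_eq_sup {s t : Set G} (hs : s.Nonempty) (g : G) {b : G} (hb : b ∈ t) :
    Subgroup.closure (g • (s * t)) =
      (Subgroup.closure ((b * g) • s)).map (MulAut.conj b⁻¹).toMonoidHom ⊔
        Subgroup.closure (b⁻¹ • t) := by
  apply le_antisymm
  · rw [Subgroup.closure_le]
    rintro _ ⟨_, ⟨a, ha, c, hc, rfl⟩, rfl⟩
    have factor : g • (a * c) = MulAut.conj b⁻¹ ((b * g) • a) * b⁻¹ • c := by simp [mul_assoc]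
    change g • (a * c) ∈ (_ : Subgroup G)
    rw [factor]
    exact mul_mem
      (Subgroup.mem_sup_left (Subgroup.mem_map_of_mem _
        (Subgroup.subset_closure (Set.smul_mem_smul_set ha))))
      (Subgroup.mem_sup_right (Subgroup.subset_closure (Set.smul_mem_smul_set hc)))
  · have mem_left {a c : G} (ha : a ∈ s) (hc : c ∈ t) :
        g • (a * c) ∈ Subgroup.closure (g • (s * t)) :=
      Subgroup.subset_closure (Set.smul_mem_smul_set (Set.mul_mem_mul ha hc))
    rw [sup_le_iff, Subgroup.map_le_iff_le_comap, Subgroup.closure_le, Subgroup.closure_le]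
    constructor
    · rintro _ ⟨a, ha, rfl⟩
      simpa [mul_assoc] using mem_left ha hb
    · rintro _ ⟨c, hc, rfl⟩
      obtain ⟨a, ha⟩ := hs
      simpa [mul_assoc] using mul_mem (inv_mem (mem_left ha hb)) (mem_left ha hc)

theorem closure_smul_submonoidClosure_eq_sup (s : Set G) (g : G) :
    Subgroup.closure (g • (Submonoid.closure s : Set G)) =
      Subgroup.closure {g} ⊔ Subgroup.closure s := by
  apply le_antisymm
  · rw [Subgroup.closure_le]
    rintro _ ⟨a, ha, rfl⟩
    exact mul_mem (Subgroup.mem_sup_left (Subgroup.mem_closure_singleton_self g))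
      (Subgroup.mem_sup_right (Subgroup.le_closure_toSubmonoid s ha))
  · have mem_left {a : G} (ha : a ∈ Submonoid.closure s) :
        g * a ∈ Subgroup.closure (g • (Submonoid.closure s : Set G)) :=
      Subgroup.subset_closure (Set.smul_mem_smul_set ha)
    have hg : g ∈ Subgroup.closure (g • (Submonoid.closure s : Set G)) := by
      simpa using mem_left (one_mem _)
    rw [sup_le_iff, Subgroup.closure_le, Subgroup.closure_le, Set.singleton_subset_iff]
    exact ⟨hg, fun a ha =>
      (Subgroup.mul_mem_cancel_left _ hg).1 (mem_left (Submonoid.subset_closure ha))⟩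

/- The translates are what makes the induction work: in a product `s * t` the elements of `s` and
`t` themselves need not lie in the generated subgroup, only their quotients do. -/
theorem IsRational.fg_closure_smul {R : Set G} (hR : IsRational R) :
    ∀ g : G, (Subgroup.closure (g • R)).FG := by
  induction hR with
  | finite s hs => exact fun g => (Subgroup.fg_iff _).2 ⟨g • s, rfl, hs.smul_set⟩
  | union _ _ ihs iht =>
    intro g
    rw [Set.smul_set_union, Subgroup.closure_union]
    exact (ihs g).sup (iht g)
  | @mul s t _ _ ihs iht =>
    intro g
    rcases s.eq_empty_or_nonempty with rfl | hs
    · simpa using Subgroup.FG.bot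
    rcases t.eq_empty_or_nonempty with rfl | ⟨b, hb⟩
    · simpa using Subgroup.FG.bot
    rw [closure_smul_mul_eq_sup hs g hb]
    exact (subgroup_fg_map (ihs (b * g)) _).sup (iht b⁻¹)
  | @star s _ ihs =>
    intro g
    rw [closure_smul_submonoidClosure_eq_sup]
    exact Subgroup.FG.sup ⟨{g}, by simp⟩ (by simpa using ihs 1)

theorem IsRational.fg_closure_s13 {R : Set G} (hR : IsRational R) : (Subgroup.closure R).FG := by
  simpa using hR.fg_closure_smul 1

end RationalSubsets

section VerbalSets

variable {G H : Type*} [Group G] [Group H] {w : FreeGroup ℕ}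

theorem map_mem_verbalSet (f : G →* H) {g : G} (hg : g ∈ verbalSet w G) : f g ∈ verbalSet w H := by
  obtain ⟨φ, rfl⟩ := hg
  exact ⟨f.comp φ, rfl⟩

theorem image_verbalSet_of_surjective {f : G →* H} (hf : Function.Surjective f) :
    f '' verbalSet w G = verbalSet w H := by
  apply Set.Subset.antisymm
  · rintro _ ⟨g, hg, rfl⟩
    exact map_mem_verbalSet f hg
  · rintro _ ⟨ψ, rfl⟩
    choose lift_of hlift_of using fun i => hf (ψ (FreeGroup.of i))
    have hψ : f.comp (FreeGroup.lift lift_of) = ψ := by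
      ext i
      simp [hlift_of]
    exact ⟨FreeGroup.lift lift_of w, ⟨_, rfl⟩, DFunLike.congr_fun hψ w⟩

theorem verbalSet_subset_ker_of_mem_commutator {A : Type*} [CommGroup A]
    (hw : w ∈ commutator (FreeGroup ℕ)) (f : G →* A) : verbalSet w G ⊆ f.ker := by
  rintro _ ⟨φ, rfl⟩
  exact Abelianization.commutator_subset_ker (f.comp φ) hw

end VerbalSets

section InfiniteRank

variable {ι : Type*}

open Classical in
/-- The endomorphism of a free group that kills the generators in `s` and fixes the others. It
detects whether an element involves generators outside `s`. -/
noncomputable def killGenerators (s : Set ι) : FreeGroup ι →* FreeGroup ι :=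
  FreeGroup.lift fun i => if i ∈ s then 1 else FreeGroup.of i

theorem killGenerators_comp_map {κ : Type*} {s : Set ι} {e : κ → ι} (he : ∀ k, e k ∉ s) :
    (killGenerators s).comp (FreeGroup.map e) = FreeGroup.map e := by
  ext k
  simp [killGenerators, he]

theorem eventually_killGenerators_eq_one (g : FreeGroup ι) :
    ∀ᶠ s : Finset ι in Filter.atTop, killGenerators (s : Set ι) g = 1 := by
  induction g using FreeGroup.induction_on with
  | C1 => simp
  | of i =>
    filter_upwards [Filter.eventually_ge_atTop {i}] with s hs
    simp [killGenerators, Finset.singleton_subset_iff.1 hs]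
  | inv_of i hi =>
    filter_upwards [hi] with s hs
    rw [map_inv, hs, inv_one]
  | mul a b ha hb =>
    filter_upwards [ha, hb] with s hsa hsb
    rw [map_mul, hsa, hsb, one_mul]

theorem exists_finset_le_ker_killGenerators {K : Subgroup (FreeGroup ι)} (hK : K.FG) :
    ∃ s : Finset ι, K ≤ (killGenerators (s : Set ι)).ker := by
  obtain ⟨S, rfl⟩ := hK
  obtain ⟨s, hs⟩ := ((Filter.eventually_all_finset S).2 fun g _ =>
    eventually_killGenerators_eq_one g).exists
  exact ⟨s, (Subgroup.closure_le _).2 hs⟩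

theorem not_verbalSet_subset_of_fg [Infinite ι] {w : FreeGroup ℕ} (hw : w ≠ 1)
    {K : Subgroup (FreeGroup ι)} (hK : K.FG) : ¬ verbalSet w (FreeGroup ι) ⊆ K := by
  intro hwK
  obtain ⟨s, hs⟩ := exists_finset_le_ker_killGenerators hK
  have : Infinite ((s : Set ι)ᶜ : Set ι) := s.finite_toSet.infinite_compl.to_subtype
  let e : ℕ ↪ ι := (Infinite.natEmbedding ((s : Set ι)ᶜ : Set ι)).trans (.subtype _)
  have he (n : ℕ) : e n ∉ (s : Set ι) := (Infinite.natEmbedding ((s : Set ι)ᶜ : Set ι) n).2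
  have map_w_eq_one : FreeGroup.map e w = 1 := by
    rw [← killGenerators_comp_map he]
    exact hs (hwK ⟨FreeGroup.map e, rfl⟩)
  exact hw ((map_eq_one_iff _ (FreeGroup.map_injective e.injective)).1 map_w_eq_one)

end InfiniteRank

section FreeWreath

/-- The action of a group `A` on the free group with basis `A` that translates the basis. -/
def freeGroupTranslation (A : Type*) [Group A] : A →* MulAut (FreeGroup A) where
  toFun a := FreeGroup.freeGroupCongr (Equiv.mulLeft a)
  map_one' := MulEquiv.toMonoidHom_injective (by ext; simp)
  map_mul' a b := MulEquiv.toMonoidHom_injective (by ext; simp [mul_assoc])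

theorem freeGroupTranslation_of {A : Type*} [Group A] (a b : A) :
    freeGroupTranslation A a (FreeGroup.of b) = FreeGroup.of (a * b) := by
  simp [freeGroupTranslation]

/-- The analogue of the wreath product `ℤ ≀ A` in which the copies of `ℤ` indexed by `A` generate
their free product instead of their direct sum. -/
abbrev FreeWreath (A : Type*) [Group A] : Type _ :=
  FreeGroup A ⋊[freeGroupTranslation A] A

namespace FreeWreath

open SemidirectProduct

section

variable {A : Type*} [Group A]

theorem conj_inr_inl_of (a b : A) :
    (inr a * inl (FreeGroup.of b) * inr a⁻¹ : FreeWreath A) = inl (FreeGroup.of (a * b)) := by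
  rw [← inl_aut, freeGroupTranslation_of]

theorem closure_insert_image_inr {s : Set A} (hs : Subgroup.closure s = ⊤) :
    Subgroup.closure (insert (inl (FreeGroup.of 1)) (inr '' s) : Set (FreeWreath A)) = ⊤ := by
  set K := Subgroup.closure (insert (inl (FreeGroup.of 1)) (inr '' s) : Set (FreeWreath A))
  have inr_mem (a : A) : inr a ∈ K := by
    have top_le : ⊤ ≤ K.comap inr := by
      rw [← hs, Subgroup.closure_le]
      exact fun a ha => Subgroup.subset_closure (.inr ⟨a, ha, rfl⟩)
    exact top_le trivial
  have inl_of_mem (a : A) : inl (FreeGroup.of a) ∈ K := by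
    rw [← mul_one a, ← conj_inr_inl_of]
    exact mul_mem (mul_mem (inr_mem a) (Subgroup.subset_closure (.inl rfl))) (inr_mem a⁻¹)
  have inl_mem (u : FreeGroup A) : inl u ∈ K := by
    have top_le : ⊤ ≤ K.comap inl := by
      rw [← FreeGroup.closure_range_of, Subgroup.closure_le]
      exact Set.range_subset_iff.2 inl_of_mem
    exact top_le trivial
  refine (Subgroup.eq_top_iff' K).2 fun u => ?_
  rw [← inl_left_mul_inr_right u]
  exact mul_mem (inl_mem _) (inr_mem _)

end

theorem not_fg_closure_verbalSet {A : Type*} [CommGroup A] [Infinite A] {w : FreeGroup ℕ}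
    (hw1 : w ≠ 1) (hw2 : w ∈ commutator (FreeGroup ℕ)) :
    ¬ (Subgroup.closure (verbalSet w (FreeWreath A))).FG := by
  intro hfg
  have le_range_inl : Subgroup.closure (verbalSet w (FreeWreath A)) ≤ inl.range := by
    rw [range_inl_eq_ker_rightHom, Subgroup.closure_le]
    exact verbalSet_subset_ker_of_mem_commutator hw2 rightHom
  rw [← Subgroup.map_comap_eq_self le_range_inl] at hfg
  exact not_verbalSet_subset_of_fg hw1 (subgroup_fg_of_map_injective inl_injective hfg)
    fun u hu => Subgroup.subset_closure (map_mem_verbalSet inl hu)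

end FreeWreath

end FreeWreath

section FreeQuotients

theorem exists_freeGroup_hom_surjective_of_closure_pair {X G : Type*} [Nontrivial X] [Group G]
    {a b : G} (hab : Subgroup.closure {a, b} = ⊤) :
    ∃ f : FreeGroup X →* G, Function.Surjective f := by
  classical
  obtain ⟨x, y, hxy⟩ := exists_pair_ne X
  refine ⟨FreeGroup.lift fun z => if z = x then a else b,
    FreeGroup.lift_surjective_iff_closure_range_eq_top.2 (top_unique (hab ▸ ?_))⟩
  exact Subgroup.closure_mono
    (Set.pair_subset ⟨x, if_pos rfl⟩ ⟨y, if_neg hxy.symm⟩)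

theorem exists_freeGroup_hom_freeWreath_surjective (X : Type*) [Nontrivial X] :
    ∃ f : FreeGroup X →* FreeWreath (Multiplicative ℤ), Function.Surjective f := by
  have closure_one : Subgroup.closure {Multiplicative.ofAdd (1 : ℤ)} = ⊤ :=
    (Subgroup.eq_top_iff' _).2 fun n =>
      Subgroup.mem_closure_singleton.2 ⟨n.toAdd, by rw [← ofAdd_zsmul]; simp⟩
  have closure_pair := FreeWreath.closure_insert_image_inr closure_one
  rw [Set.image_singleton] at closure_pair
  exact exists_freeGroup_hom_surjective_of_closure_pair closure_pair

theorem not_fg_closure_verbalSet_of_surjective {G X : Type*} [Group G] [Nontrivial X]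
    {f : G →* FreeGroup X} (hf : Function.Surjective f) {w : FreeGroup ℕ} (hw1 : w ≠ 1)
    (hw2 : w ∈ commutator (FreeGroup ℕ)) : ¬ (Subgroup.closure (verbalSet w G)).FG := by
  intro hfg
  obtain ⟨p, hp⟩ := exists_freeGroup_hom_freeWreath_surjective X
  have hpf : Function.Surjective (p.comp f) := hp.comp hf
  have hfg' := subgroup_fg_map hfg (p.comp f)
  rw [MonoidHom.map_closure, image_verbalSet_of_surjective hpf] at hfg'
  exact FreeWreath.not_fg_closure_verbalSet hw1 hw2 hfg'

end FreeQuotients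

theorem stmt_13_general {G X : Type*} [Group G] [Nontrivial X] {f : G →* FreeGroup X}
    (hf : Function.Surjective f) {w : FreeGroup ℕ} (hw1 : w ≠ 1)
    (hw2 : w ∈ commutator (FreeGroup ℕ)) : ¬ IsRational (verbalSet w G) :=
  fun hR => not_fg_closure_verbalSet_of_surjective hf hw1 hw2 hR.fg_closure_s13

/-- In a free non-abelian group `F`, for any nontrivial commutator word `w`
the verbal set `w[F]` is not rational. -/
theorem stmt_13 {X : Type*} (x y : X) (hxy : x ≠ y)
    (w : FreeGroup ℕ) (hw1 : w ≠ 1) (hw2 : w ∈ commutator (FreeGroup ℕ)) :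
    ¬ IsRational (verbalSet w (FreeGroup X)) := by
  have : Nontrivial X := ⟨x, y, hxy⟩
  exact stmt_13_general (f := MonoidHom.id (FreeGroup X)) Function.surjective_id hw1 hw2
end
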